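/- Let n : ℕ and let ⟨·,·⟩ denote the Minkowski bilinear form on ℝ^{n+1}. Suppose K, D, F, Γ : Fin (n+1) → ℝ satisfy ⟨K,K⟩ = −2, ⟨K,D⟩ = 2, ⟨D,D⟩ = 14, ⟨K,F⟩ = −2, ⟨D,F⟩ = 8, ⟨F,F⟩ = 0, ⟨K,Γ⟩ = 2, ⟨D,Γ⟩ = 4, ⟨F,Γ⟩ = 4 and ⟨Γ,Γ⟩ = 0. Then 2·K + Γ = F. -/

import Mathlib

/-- The Minkowski (Lorentzian) bilinear form on `ℝ^{n+1}`:
`⟨x, y⟩ = x 0 * y 0 - ∑_{i=1}^{n} x i * y i`. -/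
def mink (n : ℕ) (x y : Fin (n + 1) → ℝ) : ℝ :=
  x 0 * y 0 - ∑ i ∈ Finset.Ioi (0 : Fin (n + 1)), x i * y i

theorem mink_index (n : ℕ) (M Z : Fin (n + 1) → ℝ) (hM : 0 < mink n M M)
    (hMZ : mink n M Z = 0) (hZ : mink n Z Z = 0) : Z = 0 := by
  unfold mink at *
  have cs := Finset.sum_mul_sq_le_sq_mul_sq (Finset.Ioi (0 : Fin (n + 1))) M Z
  simp only [pow_two] at cs
  set a := ∑ i ∈ Finset.Ioi (0 : Fin (n + 1)), M i * M i
  set b := ∑ i ∈ Finset.Ioi (0 : Fin (n + 1)), M i * Z i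
  set c := ∑ i ∈ Finset.Ioi (0 : Fin (n + 1)), Z i * Z i with hc
  have hb : b = M 0 * Z 0 := by linarith
  have hc' : c = Z 0 * Z 0 := by linarith
  rw [hb, hc'] at cs
  have h0 : Z 0 * Z 0 = 0 := by
    have h1 : 0 ≤ Z 0 * Z 0 := mul_self_nonneg _
    have h2 : (M 0 * M 0 - a) * (Z 0 * Z 0) ≤ 0 := by nlinarith
    by_contra hne
    have h3 : 0 < Z 0 * Z 0 := lt_of_le_of_ne h1 (Ne.symm hne)
    have := mul_pos hM h3
    linarith
  have hs : c = 0 := by rw [hc', h0]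
  rw [hc, Finset.sum_eq_zero_iff_of_nonneg (fun i _ => mul_self_nonneg _)] at hs
  funext i
  by_cases hi : i = 0
  · subst hi
    simpa using h0
  · have := hs i (Finset.mem_Ioi.mpr (Fin.pos_iff_ne_zero.mpr hi))
    simpa using this

theorem mink_comm' (n : ℕ) (x y : Fin (n + 1) → ℝ) : mink n x y = mink n y x := by
  simp only [mink, mul_comm]

theorem mink_add_left (n : ℕ) (x y z : Fin (n + 1) → ℝ) :
    mink n (x + y) z = mink n x z + mink n y z := by
  simp only [mink, Pi.add_apply, add_mul, Finset.sum_add_distrib]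
  ring

theorem mink_sub_left (n : ℕ) (x y z : Fin (n + 1) → ℝ) :
    mink n (x - y) z = mink n x z - mink n y z := by
  simp only [mink, Pi.sub_apply, sub_mul, Finset.sum_sub_distrib]
  ring

theorem mink_add_right (n : ℕ) (x y z : Fin (n + 1) → ℝ) :
    mink n z (x + y) = mink n z x + mink n z y := by
  rw [mink_comm', mink_add_left, mink_comm' n x, mink_comm' n y]

theorem mink_sub_right (n : ℕ) (x y z : Fin (n + 1) → ℝ) :
    mink n z (x - y) = mink n z x - mink n z y := by
  rw [mink_comm', mink_sub_left, mink_comm' n x, mink_comm' n y]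

/-- Proposition 2.7 (case k = 9, genus-2 component with self-intersection 0):
`Γ ≡ −2K_W + F`. -/
theorem case9_genus2_component (n : ℕ) (K D F Γ : Fin (n + 1) → ℝ)
    (hKK : mink n K K = -2) (hKD : mink n K D = 2) (hDD : mink n D D = 14)
    (hKF : mink n K F = -2) (hDF : mink n D F = 8) (hFF : mink n F F = 0)
    (hKΓ : mink n K Γ = 2) (hDΓ : mink n D Γ = 4) (hFΓ : mink n F Γ = 4)
    (hΓΓ : mink n Γ Γ = 0) :
    2 • K + Γ = F := by
  rw [two_nsmul, ← sub_eq_zero]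
  have e1 := mink_comm' n D K
  have e2 := mink_comm' n F K
  have e3 := mink_comm' n Γ K
  have e4 := mink_comm' n Γ F
  apply mink_index n (K + K + D)
  all_goals
    simp only [mink_add_left, mink_add_right, mink_sub_left, mink_sub_right]
    linarith
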